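/- arXiv:2402.13156 — 8 statements merged into one kernel-verified Lean document; each statement's English description precedes it below -/
import Mathlib

section
/- Fix a principal–agent instance and α ∈ (0,1]. For every deterministic contract p ∈ ℝ_{≥0}^Ω and every pair of cost vectors c, c̃ ∈ C, the 'linearized' contract p̃ := p + α·(r − p) satisfies U^p(p̃, c̃) ≥ U^p(p, c) − (2·‖c − c̃‖_∞/α + α). -/
open Finset

variable {A Ω : Type} [Fintype A] [Fintype Ω] [Nonempty A] [Nonempty Ω]

/-- Agent's expected utility `U^a(p,c,a)` of action `a` under contract `p` and costs `c`. -/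
noncomputable def Uag (F : A → Ω → ℝ) (p : Ω → ℝ) (c : A → ℝ) (a : A) : ℝ :=
  (∑ ω, F a ω * p ω) - c a

/-- Principal's expected utility when the agent plays action `a` under contract `p`. -/
noncomputable def prinAct (F : A → Ω → ℝ) (r p : Ω → ℝ) (a : A) : ℝ :=
  ∑ ω, F a ω * (r ω - p ω)

/-- Principal's expected utility `U^p(p,c)`: the agent plays a best response,
with ties among best responses broken in favor of the principal. -/
noncomputable def Uprin (F : A → Ω → ℝ) (r p : Ω → ℝ) (c : A → ℝ) : ℝ :=
  sSup { x | ∃ a : A, (∀ a' : A, Uag F p c a' ≤ Uag F p c a) ∧ x = prinAct F r p a }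

/-- A deterministic contract: nonnegative payments. -/
def IsContract (p : Ω → ℝ) : Prop := ∀ ω, 0 ≤ p ω

/-- `OPT(c)`: the supremum over contracts of the principal's expected utility against `c`. -/
noncomputable def OPT (F : A → Ω → ℝ) (r : Ω → ℝ) (c : A → ℝ) : ℝ :=
  sSup { x | ∃ p : Ω → ℝ, IsContract p ∧ x = Uprin F r p c }

/-- The regret `R(p)` of a deterministic contract `p`. -/
noncomputable def regret (F : A → Ω → ℝ) (r : Ω → ℝ) (C : Set (A → ℝ)) (p : Ω → ℝ) : ℝ :=
  sSup { x | ∃ c ∈ C, x = OPT F r c - Uprin F r p c }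

/-- Uncertainty level `d(C)`: the L∞-diameter of the uncertainty set. -/
noncomputable def uncLevel (C : Set (A → ℝ)) : ℝ :=
  sSup { x | ∃ c ∈ C, ∃ c' ∈ C, x = ‖c - c'‖ }

/-- The assumptions defining a principal–agent instance `(A, Ω, r, C, F)`. -/
structure IsPAInstance (F : A → Ω → ℝ) (r : Ω → ℝ) (C : Set (A → ℝ)) : Prop where
  r_mem : ∀ ω, r ω ∈ Set.Icc (0:ℝ) 1
  F_mem : ∀ a ω, F a ω ∈ Set.Icc (0:ℝ) 1
  F_sum : ∀ a, ∑ ω, F a ω = 1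
  C_nonempty : C.Nonempty
  C_mem : ∀ c ∈ C, ∀ a, c a ∈ Set.Icc (0:ℝ) 1
  zero_action : ∃ a : A, ∀ c ∈ C, c a = 0

/-- For every deterministic contract `p` and cost vectors `c, c̃ ∈ C`,
the linearized contract `p̃ := p + α (r - p)` satisfies
`U^p(p̃, c̃) ≥ U^p(p, c) − (2‖c − c̃‖_∞ / α + α)`. -/
theorem linearized_contract_guarantee
    {A Ω : Type} [Fintype A] [Fintype Ω] [Nonempty A] [Nonempty Ω]
    (F : A → Ω → ℝ) (r : Ω → ℝ) (C : Set (A → ℝ))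
    (hInst : IsPAInstance F r C)
    (α : ℝ) (hα : α ∈ Set.Ioc (0:ℝ) 1)
    (p : Ω → ℝ) (hp : IsContract p)
    (c ctil : A → ℝ) (hc : c ∈ C) (hctil : ctil ∈ C) :
    Uprin F r (fun ω => p ω + α * (r ω - p ω)) ctil
      ≥ Uprin F r p c - (2 * ‖c - ctil‖ / α + α) := by
  obtain ⟨hα0, hα1⟩ := hα
  set q : Ω → ℝ := fun ω => p ω + α * (r ω - p ω) with hq
  have hfin : ∀ (p : Ω → ℝ) (c : A → ℝ), BddAbove
      { x | ∃ a : A, (∀ a' : A, Uag F p c a' ≤ Uag F p c a) ∧ x = prinAct F r p a } := by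
    intro p c
    apply Set.Finite.bddAbove
    refine (Set.finite_range (prinAct F r p)).subset ?_
    rintro x ⟨a, -, rfl⟩
    exact ⟨a, rfl⟩
  have hag : ∀ a, Uag F q ctil a = Uag F p ctil a + α * prinAct F r p a := by
    intro a
    have : ∑ ω, F a ω * q ω = ∑ ω, F a ω * p ω + α * ∑ ω, F a ω * (r ω - p ω) := by
      rw [Finset.mul_sum, ← Finset.sum_add_distrib]
      refine Finset.sum_congr rfl fun ω _ => ?_
      simp only [hq]; ring
    unfold Uag prinAct
    rw [this]; ring
  have hpr : ∀ a, prinAct F r q a = (1 - α) * prinAct F r p a := by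
    intro a
    unfold prinAct
    rw [Finset.mul_sum]
    refine Finset.sum_congr rfl fun ω _ => ?_
    simp only [hq]; ring
  have hle : ∀ a, prinAct F r p a ≤ 1 := by
    intro a
    rw [← hInst.F_sum a]
    refine Finset.sum_le_sum fun ω _ => ?_
    have h1 := (hInst.F_mem a ω).1
    have h2 := (hInst.r_mem ω).2
    have h3 := hp ω
    nlinarith
  have hn : ∀ a, |c a - ctil a| ≤ ‖c - ctil‖ := fun a => by
    simpa using norm_le_pi_norm (c - ctil) a
  obtain ⟨b, hb⟩ := Finite.exists_max (Uag F q ctil)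
  have h1 : prinAct F r q b ≤ Uprin F r q ctil := le_csSup (hfin q ctil) ⟨b, hb, rfl⟩
  have h2 : Uprin F r p c ≤ prinAct F r p b + 2 * ‖c - ctil‖ / α := by
    obtain ⟨a0, ha0⟩ := Finite.exists_max (Uag F p c)
    refine csSup_le ⟨_, a0, ha0, rfl⟩ ?_
    rintro x ⟨a, ha, rfl⟩
    have e1 := hb a
    rw [hag, hag] at e1
    have e2 := ha b
    unfold Uag at e1 e2
    have e3 := abs_le.1 (hn a)
    have e4 := abs_le.1 (hn b)
    have e5 : (prinAct F r p a - prinAct F r p b) ≤ 2 * ‖c - ctil‖ / α := by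
      rw [le_div_iff₀ hα0]
      linarith [e3.1, e3.2, e4.1, e4.2]
    linarith
  rw [hpr] at h1
  have h3 := hle b
  nlinarith
end

section
/- Fix a principal–agent instance with uncertainty level d(C) ≤ 1/2. For every cost vector c ∈ C and every deterministic contract p* that is optimal against c, i.e. U^p(p*,c) = OPT(c), the contract p̃ := p* + √(2·d(C))·(r − p*) satisfies U^p(p̃, c̃) ≥ OPT(c) − 2·√(2·d(C)) for every c̃ ∈ C. -/
open Finset

variable {A Ω : Type} [Fintype A] [Fintype Ω] [Nonempty A] [Nonempty Ω]

theorem uprin_aux {A Ω : Type} [Fintype A] [Fintype Ω] [Nonempty A] [Nonempty Ω]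
    (F : A → Ω → ℝ) (r p : Ω → ℝ) (c : A → ℝ) :
    ∃ a : A, (∀ a' : A, Uag F p c a' ≤ Uag F p c a) ∧ Uprin F r p c = prinAct F r p a := by
  have hfin : Set.Finite { x | ∃ a : A, (∀ a' : A, Uag F p c a' ≤ Uag F p c a) ∧
      x = prinAct F r p a } := by
    refine (Set.finite_range (prinAct F r p)).subset ?_
    rintro x ⟨a, -, rfl⟩
    exact ⟨a, rfl⟩
  obtain ⟨a, ha⟩ := Finite.exists_max (Uag F p c)
  have hne : Set.Nonempty { x | ∃ a : A, (∀ a' : A, Uag F p c a' ≤ Uag F p c a) ∧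
      x = prinAct F r p a } := ⟨_, a, ha, rfl⟩
  exact hne.csSup_mem hfin

theorem unc_aux {A Ω : Type} [Fintype A] [Fintype Ω] [Nonempty A] [Nonempty Ω]
    (F : A → Ω → ℝ) (r : Ω → ℝ) (C : Set (A → ℝ))
    (hInst : IsPAInstance F r C) (c c' : A → ℝ) (hc : c ∈ C) (hc' : c' ∈ C) :
    ‖c - c'‖ ≤ uncLevel C := by
  refine le_csSup ⟨1, ?_⟩ ⟨c, hc, c', hc', rfl⟩
  rintro x ⟨b, hb, b', hb', rfl⟩
  rw [pi_norm_le_iff_of_nonneg zero_le_one]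
  intro a
  have h1 := hInst.C_mem b hb a
  have h2 := hInst.C_mem b' hb' a
  rw [Pi.sub_apply, Real.norm_eq_abs, abs_le]
  constructor <;> linarith [h1.1, h1.2, h2.1, h2.2]

/-- In an instance with `d(C) ≤ 1/2`, for every `c ∈ C` and optimal
contract `p*` against `c`, the contract `p̃ := p* + √(2 d(C)) (r − p*)` satisfies
`U^p(p̃, c̃) ≥ OPT(c) − 2√(2 d(C))` for every `c̃ ∈ C`. -/
theorem linearized_optimal_contract_guarantee
    {A Ω : Type} [Fintype A] [Fintype Ω] [Nonempty A] [Nonempty Ω]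
    (F : A → Ω → ℝ) (r : Ω → ℝ) (C : Set (A → ℝ))
    (hInst : IsPAInstance F r C)
    (hd : uncLevel C ≤ 1/2)
    (c : A → ℝ) (hc : c ∈ C)
    (pstar : Ω → ℝ) (hpstar : IsContract pstar)
    (hopt : Uprin F r pstar c = OPT F r c)
    (ctil : A → ℝ) (hctil : ctil ∈ C) :
    Uprin F r (fun ω => pstar ω + Real.sqrt (2 * uncLevel C) * (r ω - pstar ω)) ctil
      ≥ OPT F r c - 2 * Real.sqrt (2 * uncLevel C) := by
  have hn := unc_aux F r C hInst c ctil hc hctil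
  have hd0 : 0 ≤ uncLevel C := (norm_nonneg _).trans hn
  have hsq : Real.sqrt (2 * uncLevel C) ^ 2 = 2 * uncLevel C := Real.sq_sqrt (by linarith)
  have hs1 : Real.sqrt (2 * uncLevel C) ≤ 1 := by
    rw [Real.sqrt_le_iff]; constructor <;> linarith
  have hs0 := Real.sqrt_nonneg (2 * uncLevel C)
  rw [← hopt]
  generalize Real.sqrt (2 * uncLevel C) = s at *
  rcases hs0.eq_or_lt with h0 | hpos
  · subst h0
    have hu : uncLevel C = 0 := by nlinarith
    have : c = ctil := by
      rw [hu] at hn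
      exact sub_eq_zero.mp (norm_le_zero_iff.mp hn)
    subst this
    simp
  · obtain ⟨a, ha, hua⟩ := uprin_aux F r pstar c
    obtain ⟨b, hb, hub⟩ := uprin_aux F r (fun ω => pstar ω + s * (r ω - pstar ω)) ctil
    rw [hua, hub]
    have e1 : ∀ x, Uag F (fun ω => pstar ω + s * (r ω - pstar ω)) ctil x
        = Uag F pstar c x + c x - ctil x + s * prinAct F r pstar x := by
      intro x
      simp only [Uag, prinAct, mul_add, Finset.sum_add_distrib, Finset.mul_sum]
      have : ∑ i, F x i * (s * (r i - pstar i)) = ∑ i, s * (F x i * (r i - pstar i)) :=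
        Finset.sum_congr rfl fun i _ => by ring
      rw [this]; ring
    have e2 : prinAct F r (fun ω => pstar ω + s * (r ω - pstar ω)) b
        = (1 - s) * prinAct F r pstar b := by
      simp only [prinAct, Finset.mul_sum]
      exact Finset.sum_congr rfl fun i _ => by ring
    have h1 := hb a
    rw [e1, e1] at h1
    have h2 := ha b
    have hle : prinAct F r pstar a ≤ 1 := by
      rw [← hInst.F_sum a]
      refine Finset.sum_le_sum fun i _ => ?_
      have := (hInst.F_mem a i).1
      have h3 := (hInst.r_mem i).2
      have h4 := hpstar i
      nlinarith
    have k : ∀ x, |c x - ctil x| ≤ uncLevel C := fun x =>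
      (norm_le_pi_norm (c - ctil) x).trans hn
    have ka := abs_le.mp (k a)
    have kb := abs_le.mp (k b)
    have h5 : s * (prinAct F r pstar a - s) ≤ s * prinAct F r pstar b := by
      nlinarith [ka.1, ka.2, kb.1, kb.2]
    have h6 := le_of_mul_le_mul_left h5 hpos
    rw [e2]
    have h7 := mul_le_mul_of_nonneg_left h6 (sub_nonneg.mpr hs1)
    nlinarith [mul_le_mul_of_nonneg_left hle hpos.le, sq_nonneg s]
end

section
/- In any principal–agent instance, for every pair of cost vectors c, c̃ ∈ C it holds that |OPT(c) − OPT(c̃)| ≤ 2·√(2·d(C)). -/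
open Finset

variable {A Ω : Type} [Fintype A] [Fintype Ω] [Nonempty A] [Nonempty Ω]

theorem aux_prin_le_one (F : A → Ω → ℝ) (r : Ω → ℝ) (C : Set (A → ℝ))
    (hI : IsPAInstance F r C) (p : Ω → ℝ) (hp : IsContract p) (a : A) :
    prinAct F r p a ≤ 1 := by
  unfold prinAct
  rw [← hI.F_sum a]
  apply Finset.sum_le_sum
  intro ω _
  have h1 := (hI.F_mem a ω).1
  have h2 := (hI.r_mem ω).2
  have h3 := hp ω
  nlinarith

theorem aux_attain (F : A → Ω → ℝ) (r p : Ω → ℝ) (c : A → ℝ) :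
    ∃ a : A, (∀ a' : A, Uag F p c a' ≤ Uag F p c a) ∧ Uprin F r p c = prinAct F r p a := by
  have hne : { x | ∃ a : A, (∀ a' : A, Uag F p c a' ≤ Uag F p c a) ∧
      x = prinAct F r p a }.Nonempty := by
    obtain ⟨a, ha⟩ := Finite.exists_max (Uag F p c)
    exact ⟨_, a, ha, rfl⟩
  have hfin : { x | ∃ a : A, (∀ a' : A, Uag F p c a' ≤ Uag F p c a) ∧
      x = prinAct F r p a }.Finite := by
    apply (Set.finite_range (prinAct F r p)).subset
    rintro x ⟨a, _, rfl⟩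
    exact ⟨a, rfl⟩
  exact hne.csSup_mem hfin

theorem aux_le_OPT (F : A → Ω → ℝ) (r : Ω → ℝ) (C : Set (A → ℝ))
    (hI : IsPAInstance F r C) (c : A → ℝ) (p : Ω → ℝ) (hp : IsContract p) :
    Uprin F r p c ≤ OPT F r c := by
  apply le_csSup
  · refine ⟨1, ?_⟩
    rintro x ⟨q, hq, rfl⟩
    obtain ⟨a, _, h⟩ := aux_attain F r q c
    rw [h]
    exact aux_prin_le_one F r C hI q hq a
  · exact ⟨p, hp, rfl⟩

theorem aux_OPT_le (F : A → Ω → ℝ) (r : Ω → ℝ) (c : A → ℝ) (b : ℝ)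
    (h : ∀ p, IsContract p → Uprin F r p c ≤ b) : OPT F r c ≤ b := by
  apply csSup_le
  · exact ⟨_, fun _ => 0, fun _ => le_refl _, rfl⟩
  · rintro x ⟨p, hp, rfl⟩
    exact h p hp

theorem aux_OPT_nonneg (F : A → Ω → ℝ) (r : Ω → ℝ) (C : Set (A → ℝ))
    (hI : IsPAInstance F r C) (c : A → ℝ) : 0 ≤ OPT F r c := by
  refine le_trans ?_ (aux_le_OPT F r C hI c (fun _ => 0) (fun _ => le_refl _))
  obtain ⟨a, _, h⟩ := aux_attain F r (fun _ => 0) c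
  rw [h]
  unfold prinAct
  apply Finset.sum_nonneg
  intro ω _
  have h1 := (hI.F_mem a ω).1
  have h2 := (hI.r_mem ω).1
  simpa using mul_nonneg h1 h2

theorem aux_side (F : A → Ω → ℝ) (r : Ω → ℝ) (C : Set (A → ℝ))
    (hI : IsPAInstance F r C) (c c' : A → ℝ) (d : ℝ) (hd : ∀ a, |c a - c' a| ≤ d) :
    OPT F r c - OPT F r c' ≤ 2 * Real.sqrt (2 * d) := by
  have hd0 : 0 ≤ d := (abs_nonneg _).trans (hd (Classical.arbitrary A))
  have hs : Real.sqrt (2 * d) * Real.sqrt (2 * d) = 2 * d :=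
    Real.mul_self_sqrt (by positivity)
  have hs0 := Real.sqrt_nonneg (2 * d)
  set η := Real.sqrt (2 * d) with hη
  rcases hs0.eq_or_lt with h0 | hpos
  · have hd' : d = 0 := by rw [← h0] at hs; linarith
    have : c = c' := by
      funext a
      have := hd a
      rw [hd'] at this
      exact sub_eq_zero.mp (abs_nonpos_iff.mp this)
    rw [this]; linarith
  have hlast := aux_OPT_nonneg F r C hI c'
  suffices h : OPT F r c ≤ OPT F r c' + 2 * η by linarith
  apply aux_OPT_le
  intro p hp
  obtain ⟨a, ha, hU⟩ := aux_attain F r p c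
  rw [hU]
  have hU1 := aux_prin_le_one F r C hI p hp a
  by_cases hη1 : 1 ≤ η
  · linarith
  push Not at hη1
  have hq : IsContract (fun ω => p ω + η * (r ω - p ω)) := by
    intro ω
    have h1 := hp ω
    have h2 := (hI.r_mem ω).1
    show 0 ≤ p ω + η * (r ω - p ω)
    nlinarith [mul_nonneg hs0 h2, mul_nonneg (sub_nonneg.mpr hη1.le) h1]
  have hle := aux_le_OPT F r C hI c' _ hq
  obtain ⟨b, hb, hV⟩ := aux_attain F r (fun ω => p ω + η * (r ω - p ω)) c'
  rw [hV] at hle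
  have e1 : ∀ x, prinAct F r (fun ω => p ω + η * (r ω - p ω)) x
      = (1 - η) * prinAct F r p x := by
    intro x
    unfold prinAct
    rw [Finset.mul_sum]
    exact Finset.sum_congr rfl fun ω _ => by ring
  have e2 : ∀ x, Uag F (fun ω => p ω + η * (r ω - p ω)) c' x
      = Uag F p c x + η * prinAct F r p x + (c x - c' x) := by
    intro x
    unfold Uag prinAct
    have : ∑ ω, F x ω * (p ω + η * (r ω - p ω))
        = ∑ ω, F x ω * p ω + η * ∑ ω, F x ω * (r ω - p ω) := by
      rw [Finset.mul_sum, ← Finset.sum_add_distrib]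
      exact Finset.sum_congr rfl fun ω _ => by ring
    rw [this]; ring
  have h1 := hb a
  rw [e2, e2] at h1
  have h2 := ha b
  have h3 := abs_le.mp (hd a)
  have h4 := abs_le.mp (hd b)
  rw [e1] at hle
  have h5 : η * prinAct F r p a ≤ η * (prinAct F r p b + η) := by
    nlinarith [h3.1, h4.2]
  have h6 := le_of_mul_le_mul_left h5 hpos
  nlinarith [mul_le_mul_of_nonneg_left h6 (sub_nonneg.mpr hη1.le),
    mul_le_mul_of_nonneg_left hU1 hs0, mul_self_nonneg η]

/-- For every pair of cost vectors `c, c̃ ∈ C`,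
`|OPT(c) − OPT(c̃)| ≤ 2√(2 d(C))`. -/
theorem opt_holder_continuity
    {A Ω : Type} [Fintype A] [Fintype Ω] [Nonempty A] [Nonempty Ω]
    (F : A → Ω → ℝ) (r : Ω → ℝ) (C : Set (A → ℝ))
    (hInst : IsPAInstance F r C)
    (c ctil : A → ℝ) (hc : c ∈ C) (hctil : ctil ∈ C) :
    |OPT F r c - OPT F r ctil| ≤ 2 * Real.sqrt (2 * uncLevel C) := by
  have hd : ∀ x ∈ C, ∀ y ∈ C, ∀ a, |x a - y a| ≤ uncLevel C := by
    intro x hx y hy a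
    have h1 : ‖x - y‖ ≤ uncLevel C := by
      apply le_csSup
      · refine ⟨1, ?_⟩
        rintro z ⟨u, hu, v, hv, rfl⟩
        rw [pi_norm_le_iff_of_nonneg zero_le_one]
        intro i
        have h1 := hInst.C_mem u hu i
        have h2 := hInst.C_mem v hv i
        rw [Pi.sub_apply, Real.norm_eq_abs, abs_le]
        constructor <;> linarith [h1.1, h1.2, h2.1, h2.2]
      · exact ⟨x, hx, y, hy, rfl⟩
    exact (norm_le_pi_norm (x - y) a).trans h1
  rw [abs_le]
  have h1 := aux_side F r C hInst c ctil _ (hd c hc ctil hctil)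
  have h2 := aux_side F r C hInst ctil c _ (hd ctil hctil c hc)
  constructor <;> linarith
end

section
/- In any principal–agent instance, the infimum over deterministic contracts p ∈ ℝ_{≥0}^Ω of the regret R(p) is at most 4·√(2·d(C)). -/
open Finset

variable {A Ω : Type} [Fintype A] [Fintype Ω] [Nonempty A] [Nonempty Ω]

section helpers

variable {A Ω : Type} [Fintype A] [Fintype Ω]

theorem prinAct_le_one' {F : A → Ω → ℝ} {r p : Ω → ℝ} {C : Set (A → ℝ)}
    (h : IsPAInstance F r C) (hp : IsContract p) (a : A) : prinAct F r p a ≤ 1 := by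
  unfold prinAct
  rw [← h.F_sum a]
  refine Finset.sum_le_sum fun ω _ => ?_
  have h1 := (h.F_mem a ω).1
  have h2 := (h.r_mem ω).2
  have h3 := hp ω
  nlinarith

theorem le_Uprin' {F : A → Ω → ℝ} {r p : Ω → ℝ} {C : Set (A → ℝ)}
    (h : IsPAInstance F r C) (hp : IsContract p) (c : A → ℝ) (a : A)
    (ha : ∀ a' : A, Uag F p c a' ≤ Uag F p c a) : prinAct F r p a ≤ Uprin F r p c := by
  refine le_csSup ⟨1, ?_⟩ ⟨a, ha, rfl⟩
  rintro x ⟨b, _, rfl⟩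
  exact prinAct_le_one' h hp b

theorem exists_br' [Nonempty A] (F : A → Ω → ℝ) (p : Ω → ℝ) (c : A → ℝ) :
    ∃ a, ∀ a' : A, Uag F p c a' ≤ Uag F p c a :=
  Finite.exists_max (Uag F p c)

theorem Uprin_le' [Nonempty A] {F : A → Ω → ℝ} {r p : Ω → ℝ} {c : A → ℝ} {M : ℝ}
    (hM : ∀ a, (∀ a' : A, Uag F p c a' ≤ Uag F p c a) → prinAct F r p a ≤ M) :
    Uprin F r p c ≤ M := by
  obtain ⟨a, ha⟩ := exists_br' F p c
  refine csSup_le ⟨_, a, ha, rfl⟩ ?_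
  rintro x ⟨b, hb, rfl⟩
  exact hM b hb

theorem Uprin_le_OPT' [Nonempty A] {F : A → Ω → ℝ} {r p : Ω → ℝ} {C : Set (A → ℝ)}
    (h : IsPAInstance F r C) (hp : IsContract p) (c : A → ℝ) :
    Uprin F r p c ≤ OPT F r c := by
  refine le_csSup ⟨1, ?_⟩ ⟨p, hp, rfl⟩
  rintro x ⟨q, hq, rfl⟩
  exact Uprin_le' fun a _ => prinAct_le_one' h hq a

theorem OPT_le' {F : A → Ω → ℝ} {r : Ω → ℝ} {c : A → ℝ} {M : ℝ}
    (hM : ∀ p, IsContract p → Uprin F r p c ≤ M) : OPT F r c ≤ M := by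
  refine csSup_le ⟨_, 0, fun _ => le_rfl, rfl⟩ ?_
  rintro x ⟨q, hq, rfl⟩
  exact hM q hq

/-- the linear mixture of a contract with the reward -/
def mixC (s : ℝ) (r p : Ω → ℝ) : Ω → ℝ := fun ω => (1 - s) * p ω + s * r ω

theorem mixC_contract {F : A → Ω → ℝ} {r p : Ω → ℝ} {C : Set (A → ℝ)}
    (h : IsPAInstance F r C) (hp : IsContract p) {s : ℝ} (hs : 0 < s) (hs1 : s ≤ 1) :
    IsContract (mixC s r p) := fun ω =>
  add_nonneg (mul_nonneg (by linarith) (hp ω)) (mul_nonneg hs.le (h.r_mem ω).1)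

theorem Uprin_mix [Nonempty A] {F : A → Ω → ℝ} {r p : Ω → ℝ} {C : Set (A → ℝ)}
    (h : IsPAInstance F r C) (hp : IsContract p) {s δ : ℝ} (hs : 0 < s) (hs1 : s ≤ 1)
    {c0 c : A → ℝ} (hc : ∀ a, |c a - c0 a| ≤ δ) :
    Uprin F r p c0 - 2 * δ / s - s ≤ Uprin F r (mixC s r p) c := by
  suffices H : Uprin F r p c0 ≤ Uprin F r (mixC s r p) c + 2 * δ / s + s by linarith
  refine Uprin_le' fun a0 ha0 => ?_
  obtain ⟨a, ha⟩ := exists_br' F (mixC s r p) c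
  have h1 := le_Uprin' h (mixC_contract h hp hs hs1) c a ha
  have h2 := ha a0
  have h3 := ha0 a
  have hx := prinAct_le_one' h hp a
  have e1 : prinAct F r (mixC s r p) a = (1 - s) * prinAct F r p a := by
    unfold prinAct mixC
    rw [Finset.mul_sum]
    exact Finset.sum_congr rfl fun ω _ => by ring
  have e2 : ∀ b, Uag F (mixC s r p) c b
      = s * prinAct F r p b + Uag F p c0 b + (c0 b - c b) := by
    intro b
    have : ∑ ω, F b ω * mixC s r p ω = s * prinAct F r p b + ∑ ω, F b ω * p ω := by
      unfold prinAct mixC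
      rw [Finset.mul_sum, ← Finset.sum_add_distrib]
      exact Finset.sum_congr rfl fun ω _ => by ring
    unfold Uag
    rw [this]; ring
  rw [e2, e2] at h2
  have b1 := abs_le.1 (hc a)
  have b2 := abs_le.1 (hc a0)
  have key : prinAct F r p a0 - prinAct F r p a ≤ 2 * δ / s := by
    rw [le_div_iff₀ hs]
    nlinarith
  rw [e1] at h1
  nlinarith

end helpers

/-- The infimum over deterministic contracts of the regret is at most
`4√(2 d(C))`. -/
theorem det_regret_upper_bound
    {A Ω : Type} [Fintype A] [Fintype Ω] [Nonempty A] [Nonempty Ω]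
    (F : A → Ω → ℝ) (r : Ω → ℝ) (C : Set (A → ℝ))
    (hInst : IsPAInstance F r C) :
    sInf { x | ∃ p : Ω → ℝ, IsContract p ∧ x = regret F r C p }
      ≤ 4 * Real.sqrt (2 * uncLevel C) := by
  classical
  set δ := uncLevel C with hδ
  have hdist : ∀ c ∈ C, ∀ c' ∈ C, ∀ a, |c a - c' a| ≤ δ := by
    intro c hc c' hc' a
    have h1 : ‖c - c'‖ ≤ δ := by
      refine le_csSup ⟨1, ?_⟩ ⟨c, hc, c', hc', rfl⟩
      rintro x ⟨u, hu, v, hv, rfl⟩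
      rw [pi_norm_le_iff_of_nonneg zero_le_one]
      intro b
      have h1 := hInst.C_mem u hu b
      have h2 := hInst.C_mem v hv b
      rw [Pi.sub_apply, Real.norm_eq_abs, abs_le]
      constructor <;> linarith [h1.1, h1.2, h2.1, h2.2]
    have h2 := norm_le_pi_norm (c - c') a
    rw [Pi.sub_apply, Real.norm_eq_abs] at h2
    exact h2.trans h1
  obtain ⟨c0, hc0⟩ := hInst.C_nonempty
  have hδ0 : 0 ≤ δ := by
    obtain ⟨a⟩ := (inferInstance : Nonempty A)
    exact (abs_nonneg _).trans (hdist c0 hc0 c0 hc0 a)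
  by_cases hb : BddBelow { x | ∃ p : Ω → ℝ, IsContract p ∧ x = regret F r C p }
  swap
  · rw [Real.sInf_of_not_bddBelow hb]
    positivity
  have hreg : ∀ (p : Ω → ℝ) (M : ℝ), IsContract p →
      (∀ c ∈ C, OPT F r c - Uprin F r p c ≤ M) →
      sInf { x | ∃ p : Ω → ℝ, IsContract p ∧ x = regret F r C p } ≤ M := by
    intro p M hp hM
    refine (csInf_le hb ⟨p, hp, rfl⟩).trans ?_
    refine csSup_le ⟨_, c0, hc0, rfl⟩ ?_
    rintro x ⟨c, hc, rfl⟩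
    exact hM c hc
  have main : ∀ s : ℝ, 0 < s → s ≤ 1 →
      sInf { x | ∃ p : Ω → ℝ, IsContract p ∧ x = regret F r C p }
        ≤ 2 * (2 * δ / s + s) := by
    intro s hs hs1
    refine le_of_forall_pos_le_add fun ε hε => ?_
    have hne : { x | ∃ p : Ω → ℝ, IsContract p ∧ x = Uprin F r p c0 }.Nonempty :=
      ⟨_, 0, fun _ => le_rfl, rfl⟩
    obtain ⟨x, ⟨p0, hp0, rfl⟩, hx⟩ :=
      exists_lt_of_lt_csSup hne (show OPT F r c0 - ε < OPT F r c0 by linarith)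
    refine hreg (mixC s r p0) _ (mixC_contract hInst hp0 hs hs1) fun c hc => ?_
    have h1 := Uprin_mix hInst hp0 hs hs1 (hdist c hc c0 hc0)
    have h2 : OPT F r c ≤ OPT F r c0 + 2 * δ / s + s := by
      refine OPT_le' fun q hq => ?_
      have h3 := Uprin_mix hInst hq hs hs1 (hdist c0 hc0 c hc)
      have h4 := Uprin_le_OPT' hInst (mixC_contract hInst hq hs hs1) c0
      linarith
    linarith
  rcases hδ0.eq_or_lt with h0 | hpos
  · rw [← h0]
    simp only [mul_zero, Real.sqrt_zero]
    refine le_of_forall_pos_le_add fun ε hε => ?_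
    have hm : 0 < min (ε / 2) 1 := lt_min (by linarith) one_pos
    have h1 := main (min (ε / 2) 1) hm (min_le_right _ _)
    rw [← h0, mul_zero, zero_div] at h1
    linarith [min_le_left (ε / 2) 1]
  · have hsq : 0 < Real.sqrt (2 * δ) := Real.sqrt_pos.2 (by linarith)
    rcases le_total (Real.sqrt (2 * δ)) 1 with h1 | h1
    · have := main _ hsq h1
      rw [Real.div_sqrt] at this
      linarith
    · have := main 1 one_pos le_rfl
      have hr : IsContract r := fun ω => (hInst.r_mem ω).1
      refine hreg r _ hr fun c hc => ?_
      have h2 : OPT F r c ≤ 1 :=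
        OPT_le' fun q hq => Uprin_le' fun a _ => prinAct_le_one' hInst hq a
      obtain ⟨a, ha⟩ := exists_br' F r c
      have h3 := le_Uprin' hInst hr c a ha
      have h4 : prinAct F r r a = 0 := by simp [prinAct]
      linarith
end

section
/- For every δ ∈ [0,1/2], in the hard instance I_δ the uncertainty level satisfies d(C) = δ, and every menu of randomized contracts Γ satisfies R(Γ) ≥ √(2δ)/4. -/
open Finset

variable {A Ω : Type} [Fintype A] [Fintype Ω] [Nonempty A] [Nonempty Ω]

/-- A randomized contract: a finitely supported probability distribution over
deterministic contracts, represented as a finite tuple of contracts with probabilities. -/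
structure RandCon (Ω : Type) where
  n : ℕ
  ps : Fin n → Ω → ℝ
  q : Fin n → ℝ
  q_nonneg : ∀ i, 0 ≤ q i
  q_sum : ∑ i, q i = 1

/-- All the contracts in the support are genuine (nonnegative) contracts. -/
def RandCon.valid {Ω : Type} (γ : RandCon Ω) : Prop := ∀ i ω, 0 ≤ γ.ps i ω

/-- Agent's expected utility `U^a(γ,c)` of a randomized contract. -/
noncomputable def UagRand (F : A → Ω → ℝ) (γ : RandCon Ω) (c : A → ℝ) : ℝ :=
  ∑ i, γ.q i * (⨆ a : A, Uag F (γ.ps i) c a)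

/-- Principal's expected utility `U^p(γ,c)` of a randomized contract. -/
noncomputable def UprinRand (F : A → Ω → ℝ) (r : Ω → ℝ) (γ : RandCon Ω) (c : A → ℝ) : ℝ :=
  ∑ i, γ.q i * Uprin F r (γ.ps i) c

/-- The regret `R(γ)` of a randomized contract. -/
noncomputable def regretRand (F : A → Ω → ℝ) (r : Ω → ℝ) (C : Set (A → ℝ))
    (γ : RandCon Ω) : ℝ :=
  sSup { x | ∃ c ∈ C, x = OPT F r c - UprinRand F r γ c }

/-- Principal's expected utility `U^p(Γ,c)` under a menu of randomized contracts:
the agent selects an element maximizing its own expected utility, breaking ties in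
favor of the principal. -/
noncomputable def UprinRMenu (F : A → Ω → ℝ) (r : Ω → ℝ) {K : ℕ} (Γ : Fin K → RandCon Ω)
    (c : A → ℝ) : ℝ :=
  sSup { x | ∃ i : Fin K, (∀ j : Fin K, UagRand F (Γ j) c ≤ UagRand F (Γ i) c) ∧
    x = UprinRand F r (Γ i) c }

/-- The regret `R(Γ)` of a menu of randomized contracts. -/
noncomputable def regretRMenu (F : A → Ω → ℝ) (r : Ω → ℝ) (C : Set (A → ℝ)) {K : ℕ}
    (Γ : Fin K → RandCon Ω) : ℝ :=
  sSup { x | ∃ c ∈ C, x = OPT F r c - UprinRMenu F r Γ c }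


theorem hb_Uprin_le (F : A → Ω → ℝ) (r p : Ω → ℝ) (c : A → ℝ) (b : ℝ)
    (h : ∀ a, (∀ a', Uag F p c a' ≤ Uag F p c a) → prinAct F r p a ≤ b) :
    Uprin F r p c ≤ b := by
  obtain ⟨a, ha⟩ := Finite.exists_max (Uag F p c)
  refine csSup_le ⟨_, a, ha, rfl⟩ ?_
  rintro x ⟨a, ha, rfl⟩
  exact h a ha

theorem hb_le_Uprin (F : A → Ω → ℝ) (r p : Ω → ℝ) (c : A → ℝ) (a : A)
    (ha : ∀ a', Uag F p c a' ≤ Uag F p c a) :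
    prinAct F r p a ≤ Uprin F r p c := by
  refine le_csSup ?_ ⟨a, ha, rfl⟩
  refine (Set.Finite.subset (Set.finite_range (prinAct F r p)) ?_).bddAbove
  rintro x ⟨a, _, rfl⟩
  exact ⟨a, rfl⟩

theorem hb_menu_le (F : A → Ω → ℝ) (r : Ω → ℝ) {K : ℕ} (Γ : Fin (K+1) → RandCon Ω)
    (c : A → ℝ) (b : ℝ)
    (h : ∀ i, (∀ j, UagRand F (Γ j) c ≤ UagRand F (Γ i) c) → UprinRand F r (Γ i) c ≤ b) :
    UprinRMenu F r Γ c ≤ b := by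
  obtain ⟨a, ha⟩ := Finite.exists_max (fun i => UagRand F (Γ i) c)
  refine csSup_le ⟨_, a, ha, rfl⟩ ?_
  rintro x ⟨a, ha, rfl⟩
  exact h a ha

theorem hb_le_OPT (F : A → Ω → ℝ) (r : Ω → ℝ) (c : A → ℝ)
    (h : ∀ p, IsContract p → ∀ a, prinAct F r p a ≤ 1)
    (p : Ω → ℝ) (hp : IsContract p) (a : A)
    (ha : ∀ a', Uag F p c a' ≤ Uag F p c a) :
    prinAct F r p a ≤ OPT F r c := by
  refine (hb_le_Uprin F r p c a ha).trans (le_csSup ⟨1, ?_⟩ ⟨p, hp, rfl⟩)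
  rintro x ⟨p, hp, rfl⟩
  exact hb_Uprin_le _ _ _ _ _ (fun a _ => h p hp a)

/-- In the hard instance `I_δ` (for `δ ∈ [0,1/2]`), the uncertainty
level is `d(C) = δ` and every menu of randomized contracts has regret at least
`√(2δ)/4`. -/
theorem hard_instance_lower_bound
    (δ : ℝ) (hδ : δ ∈ Set.Icc (0:ℝ) (1/2))
    (F : Fin 2 → Fin 2 → ℝ)
    (hF : F = fun a ω =>
      if a = 0 then (if ω = 0 then (1:ℝ) else 0)
      else (if ω = 0 then 1 - Real.sqrt (2*δ) else Real.sqrt (2*δ)))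
    (r : Fin 2 → ℝ) (hr : r = fun ω => if ω = 0 then (1:ℝ) else 0)
    (C : Set (Fin 2 → ℝ))
    (hC : C = {(fun _ => (0:ℝ)), (fun a => if a = 0 then δ else 0)}) :
    uncLevel C = δ ∧
      ∀ (K : ℕ) (Γ : Fin (K+1) → RandCon (Fin 2)), (∀ i, (Γ i).valid) →
        regretRMenu F r C Γ ≥ Real.sqrt (2*δ) / 4 := by
  obtain ⟨hδ0, hδ1⟩ := hδ
  set c0 : Fin 2 → ℝ := fun _ => 0 with hc0
  set c1 : Fin 2 → ℝ := fun a => if a = 0 then δ else 0 with hc1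
  constructor
  · have hn : ‖c1‖ = δ := by
      apply le_antisymm
      · rw [pi_norm_le_iff_of_nonneg hδ0]
        intro i
        fin_cases i <;> simp [hc1, abs_of_nonneg hδ0, hδ0]
      · have := norm_le_pi_norm c1 0
        simpa [hc1, abs_of_nonneg hδ0] using this
    have e0 : c0 = 0 := rfl
    apply IsGreatest.csSup_eq
    constructor
    · exact ⟨c1, by simp [hC], c0, by simp [hC], by rw [e0, sub_zero, hn]⟩
    · rintro x ⟨c, hc, c', hc', rfl⟩
      rw [hC] at hc hc'
      rcases hc with rfl | rfl <;> rcases hc' with rfl | rfl <;> simp [e0, hn, hδ0]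
  intro K Γ hΓ
  set s := Real.sqrt (2*δ) with hs
  have hs0 : 0 ≤ s := Real.sqrt_nonneg _
  have hss : s * s = 2 * δ := Real.mul_self_sqrt (by linarith)
  have hs1 : s ≤ 1 := by nlinarith
  have U0 : ∀ p c, Uag F p c 0 = p 0 - c 0 := by
    intro p c; simp [Uag, hF, Fin.sum_univ_two]
  have U1 : ∀ p c, Uag F p c 1 = (1-s) * p 0 + s * p 1 - c 1 := by
    intro p c; simp [Uag, hF, Fin.sum_univ_two]
  have P0 : ∀ p, prinAct F r p 0 = 1 - p 0 := by
    intro p; simp [prinAct, hF, hr, Fin.sum_univ_two]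
  have P1 : ∀ p, prinAct F r p 1 = (1-s) - ((1-s) * p 0 + s * p 1) := by
    intro p; simp [prinAct, hF, hr, Fin.sum_univ_two]; ring
  have hP : ∀ p, IsContract p → ∀ a, prinAct F r p a ≤ 1 := by
    intro p hp a
    have h0 := hp 0
    have h1 := hp 1
    have := mul_nonneg (sub_nonneg.2 hs1) h0
    have := mul_nonneg hs0 h1
    fin_cases a
    · have := P0 p
      simp only [Fin.zero_eta]; linarith
    · have := P1 p
      simp only [Fin.mk_one]; linarith
  have O0 : 1 ≤ OPT F r c0 := by
    have := hb_le_OPT F r c0 hP (fun _ => 0) (fun _ => le_rfl) 0 (by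
      intro a; fin_cases a
      · exact le_rfl
      · simp only [Fin.mk_one]; rw [U0, U1]; simp [hc0])
    rw [P0] at this
    linarith
  have O1 : 1 - s/2 ≤ OPT F r c1 := by
    have := hb_le_OPT F r c1 hP (fun ω => if ω = 0 then s/2 else 0)
      (by intro ω; dsimp only; split_ifs <;> linarith) 0 (by
      intro a; fin_cases a
      · exact le_rfl
      · simp only [Fin.mk_one]; rw [U0, U1]; simp [hc1]; nlinarith)
    rw [P0] at this
    simpa using this
  have S : ∀ p : Fin 2 → ℝ, ∀ a, Uag F p c0 a ≤ ⨆ a, Uag F p c0 a := fun p a =>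
    le_ciSup (Set.finite_range _).bddAbove a
  -- per-contract bounds
  have B0 : ∀ p : Fin 2 → ℝ, Uprin F r p c0 ≤ 1 - ⨆ a, Uag F p c0 a := by
    intro p
    apply hb_Uprin_le
    intro a ha
    have h1 : (⨆ a, Uag F p c0 a) ≤ Uag F p c0 a := ciSup_le ha
    fin_cases a
    · simp only [Fin.zero_eta] at *
      rw [P0]; rw [U0] at h1; simp only [hc0] at h1 ⊢; linarith
    · simp only [Fin.mk_one] at *
      rw [P1]; rw [U1] at h1; simp only [hc0] at h1 ⊢; linarith
  have B1 : ∀ p : Fin 2 → ℝ, IsContract p → Uprin F r p c1 ≤ 1 - s + ⨆ a, Uag F p c0 a := by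
    intro p hp
    have h0 := hp 0
    have h1 := hp 1
    have m0 := mul_nonneg (sub_nonneg.2 hs1) h0
    have m1 := mul_nonneg hs0 h1
    have hS := S p 0
    rw [U0] at hS
    have hz : c0 0 = 0 := rfl
    rw [hz] at hS
    apply hb_Uprin_le
    intro a ha
    fin_cases a
    · simp only [Fin.zero_eta] at *
      have := ha 1
      rw [U0, U1] at this
      have z0 : c1 0 = δ := by simp [hc1]
      have z1 : c1 1 = 0 := by simp [hc1]
      rw [z0, z1] at this
      rw [P0]
      have : s / 2 ≤ p 0 := by
        rcases hs0.eq_or_lt with h | h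
        · rw [← h]; simpa using h0
        · by_contra hlt
          push Not at hlt
          nlinarith [mul_lt_mul_of_pos_left hlt h]
      linarith
    · simp only [Fin.mk_one] at *
      rw [P1]; linarith
  -- lottery bounds
  have R0 : ∀ γ : RandCon (Fin 2), UprinRand F r γ c0 ≤ 1 - UagRand F γ c0 := by
    intro γ
    have : UprinRand F r γ c0 ≤ ∑ i, γ.q i * (1 - ⨆ a, Uag F (γ.ps i) c0 a) :=
      Finset.sum_le_sum fun i _ => mul_le_mul_of_nonneg_left (B0 _) (γ.q_nonneg i)
    simpa [mul_sub, Finset.sum_sub_distrib, γ.q_sum, UagRand] using this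
  have R1 : ∀ γ : RandCon (Fin 2), γ.valid →
      UprinRand F r γ c1 ≤ 1 - s + UagRand F γ c0 := by
    intro γ hγ
    have : UprinRand F r γ c1 ≤ ∑ i, γ.q i * ((1 - s) + ⨆ a, Uag F (γ.ps i) c0 a) :=
      Finset.sum_le_sum fun i _ => mul_le_mul_of_nonneg_left (B1 _ (hγ i)) (γ.q_nonneg i)
    simp only [mul_add, Finset.sum_add_distrib, ← Finset.sum_mul, γ.q_sum, one_mul] at this
    exact this
  obtain ⟨m, hm⟩ := Finite.exists_max (fun i => UagRand F (Γ i) c0)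
  have M0 : UprinRMenu F r Γ c0 ≤ 1 - UagRand F (Γ m) c0 := by
    apply hb_menu_le
    intro i hi
    linarith [R0 (Γ i), hi m]
  have M1 : UprinRMenu F r Γ c1 ≤ 1 - s + UagRand F (Γ m) c0 := by
    apply hb_menu_le
    intro i _
    have := hm i
    linarith [R1 (Γ i) (hΓ i)]
  have key : ∀ c ∈ C, OPT F r c - UprinRMenu F r Γ c ≤ regretRMenu F r C Γ := by
    intro c hc
    refine le_csSup ?_ ⟨c, hc, rfl⟩
    have hfin : C.Finite := by rw [hC]; exact Set.toFinite _
    refine ((hfin.image (fun c => OPT F r c - UprinRMenu F r Γ c)).subset ?_).bddAbove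
    rintro x ⟨c, hc, rfl⟩
    exact ⟨c, hc, rfl⟩
  have k0 := key c0 (by simp [hC])
  have k1 := key c1 (by simp [hC])
  linarith
end

section
/- In any principal–agent instance, there exists a deterministic contract p* attaining the infimum of the regret over all deterministic contracts, i.e. R(p*) = inf over all p ∈ ℝ_{≥0}^Ω of R(p). -/
open Finset

variable {A Ω : Type} [Fintype A] [Fintype Ω] [Nonempty A] [Nonempty Ω]

open Filter Topology

theorem prinAct_eq' {A Ω : Type} [Fintype Ω] (F : A → Ω → ℝ) (r p : Ω → ℝ) (a : A) :
    prinAct F r p a = ∑ ω, F a ω * r ω - ∑ ω, F a ω * p ω := by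
  simp only [prinAct, mul_sub, Finset.sum_sub_distrib]

theorem uprin_finite {A Ω : Type} [Fintype A] [Fintype Ω]
    (F : A → Ω → ℝ) (r p : Ω → ℝ) (c : A → ℝ) :
    { x | ∃ a : A, (∀ a' : A, Uag F p c a' ≤ Uag F p c a) ∧ x = prinAct F r p a }.Finite := by
  refine (Set.finite_range (prinAct F r p)).subset ?_
  rintro x ⟨a, _, rfl⟩
  exact ⟨a, rfl⟩

theorem le_uprin {A Ω : Type} [Fintype A] [Fintype Ω]
    (F : A → Ω → ℝ) (r p : Ω → ℝ) (c : A → ℝ) (a : A)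
    (h : ∀ a' : A, Uag F p c a' ≤ Uag F p c a) : prinAct F r p a ≤ Uprin F r p c :=
  le_csSup (uprin_finite F r p c).bddAbove ⟨a, h, rfl⟩

theorem uprin_attained {A Ω : Type} [Fintype A] [Fintype Ω] [Nonempty A]
    (F : A → Ω → ℝ) (r p : Ω → ℝ) (c : A → ℝ) :
    ∃ a : A, (∀ a' : A, Uag F p c a' ≤ Uag F p c a) ∧ Uprin F r p c = prinAct F r p a := by
  obtain ⟨a, ha⟩ := Finite.exists_max (Uag F p c)
  have hne : { x | ∃ a : A, (∀ a' : A, Uag F p c a' ≤ Uag F p c a) ∧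
      x = prinAct F r p a }.Nonempty := ⟨_, a, ha, rfl⟩
  exact hne.csSup_mem (uprin_finite F r p c)

theorem uprin_usc {A Ω : Type} [Fintype A] [Fintype Ω] [Nonempty A]
    (F : A → Ω → ℝ) (r p : Ω → ℝ) (c : A → ℝ) (t : ℝ) (ht : Uprin F r p c < t) :
    ∀ᶠ q in 𝓝 p, Uprin F r q c < t := by
  have hU : ∀ a, Continuous (fun q : Ω → ℝ => Uag F q c a) := by
    intro a; unfold Uag; fun_prop
  have hP : ∀ a, Continuous (fun q : Ω → ℝ => prinAct F r q a) := by
    intro a; unfold prinAct; fun_prop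
  have key : ∀ a, ∀ᶠ q in 𝓝 p,
      (∀ a' : A, Uag F q c a' ≤ Uag F q c a) → prinAct F r q a < t := by
    intro a
    by_cases hb : ∀ a' : A, Uag F p c a' ≤ Uag F p c a
    · have h1 := lt_of_le_of_lt (le_uprin F r p c a hb) ht
      filter_upwards [(hP a).continuousAt.eventually_lt continuousAt_const h1] with q hq _
      exact hq
    · push Not at hb
      obtain ⟨a', ha'⟩ := hb
      filter_upwards [(hU a).continuousAt.eventually_lt (hU a').continuousAt ha'] with q hq h
      exact absurd (h a') (not_le.mpr hq)
  filter_upwards [eventually_all.mpr key] with q hq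
  obtain ⟨a, ha, he⟩ := uprin_attained F r q c
  rw [he]
  exact hq a ha

section inst
set_option linter.unusedSectionVars false
variable {A Ω : Type} [Fintype A] [Fintype Ω] [Nonempty A] [Nonempty Ω]
    {F : A → Ω → ℝ} {r : Ω → ℝ} {C : Set (A → ℝ)}

theorem rew_nonneg (h : IsPAInstance F r C) (a : A) : 0 ≤ ∑ ω, F a ω * r ω :=
  Finset.sum_nonneg fun ω _ => mul_nonneg (h.F_mem a ω).1 (h.r_mem ω).1

theorem rew_le (h : IsPAInstance F r C) (a : A) : ∑ ω, F a ω * r ω ≤ 1 := by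
  rw [← h.F_sum a]
  exact Finset.sum_le_sum fun ω _ => mul_le_of_le_one_right (h.F_mem a ω).1 (h.r_mem ω).2

theorem pay_nonneg (h : IsPAInstance F r C) (a : A) {p : Ω → ℝ} (hp : IsContract p) :
    0 ≤ ∑ ω, F a ω * p ω :=
  Finset.sum_nonneg fun ω _ => mul_nonneg (h.F_mem a ω).1 (hp ω)

theorem pay_le (h : IsPAInstance F r C) (a : A) {p : Ω → ℝ} (hp : IsContract p) :
    ∑ ω, F a ω * p ω ≤ ∑ ω, p ω :=
  Finset.sum_le_sum fun ω _ => mul_le_of_le_one_left (hp ω) (h.F_mem a ω).2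

theorem uprin_le_one (h : IsPAInstance F r C) {p : Ω → ℝ} (hp : IsContract p) (c : A → ℝ) :
    Uprin F r p c ≤ 1 := by
  obtain ⟨a, _, he⟩ := uprin_attained F r p c
  rw [he, prinAct_eq']
  linarith [rew_le h a, pay_nonneg h a hp]

theorem uprin_ge (h : IsPAInstance F r C) {p : Ω → ℝ} (hp : IsContract p) (c : A → ℝ) :
    -∑ ω, p ω ≤ Uprin F r p c := by
  obtain ⟨a, _, he⟩ := uprin_attained F r p c
  rw [he, prinAct_eq']
  linarith [rew_nonneg h a, pay_le h a hp]

theorem zero_contract : IsContract (0 : Ω → ℝ) := fun _ => le_rfl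

theorem opt_le_one (h : IsPAInstance F r C) (c : A → ℝ) : OPT F r c ≤ 1 := by
  refine csSup_le ⟨_, 0, zero_contract, rfl⟩ ?_
  rintro x ⟨p, hp, rfl⟩
  exact uprin_le_one h hp c

theorem opt_nonneg (h : IsPAInstance F r C) (c : A → ℝ) : 0 ≤ OPT F r c := by
  have h0 := uprin_ge h zero_contract c
  simp only [Pi.zero_apply, Finset.sum_const_zero, neg_zero] at h0
  refine h0.trans (le_csSup ⟨1, ?_⟩ ⟨0, zero_contract, rfl⟩)
  rintro x ⟨p, hp, rfl⟩
  exact uprin_le_one h hp c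

theorem le_regret (h : IsPAInstance F r C) {p : Ω → ℝ} (hp : IsContract p) {c : A → ℝ}
    (hc : c ∈ C) : OPT F r c - Uprin F r p c ≤ regret F r C p := by
  refine le_csSup ⟨1 + ∑ ω, p ω, ?_⟩ ⟨c, hc, rfl⟩
  rintro x ⟨c, hc, rfl⟩
  linarith [opt_le_one h c, uprin_ge h hp c]

theorem regret_zero_le (h : IsPAInstance F r C) : regret F r C 0 ≤ 1 := by
  obtain ⟨c, hc⟩ := h.C_nonempty
  refine csSup_le ⟨_, c, hc, rfl⟩ ?_
  rintro x ⟨c, hc, rfl⟩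
  have h0 := uprin_ge h zero_contract c
  simp only [Pi.zero_apply, Finset.sum_const_zero, neg_zero] at h0
  linarith [opt_le_one h c]

theorem regret_large (h : IsPAInstance F r C) {p : Ω → ℝ} (hp : IsContract p) (a : A) (ω : Ω)
    (hl : 3 < F a ω * p ω) : 1 ≤ regret F r C p := by
  obtain ⟨c, hc⟩ := h.C_nonempty
  refine le_trans ?_ (le_regret h hp hc)
  obtain ⟨b, hb, he⟩ := uprin_attained F r p c
  have h1 := hb a
  unfold Uag at h1
  have h2 : F a ω * p ω ≤ ∑ ω, F a ω * p ω :=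
    Finset.single_le_sum (f := fun ω => F a ω * p ω)
      (fun ω _ => mul_nonneg (h.F_mem a ω).1 (hp ω)) (Finset.mem_univ ω)
  rw [he, prinAct_eq']
  linarith [(h.C_mem c hc a).2, (h.C_mem c hc b).1, rew_le h b, opt_nonneg h c]

theorem regret_lsc (h : IsPAInstance F r C) {K : Set (Ω → ℝ)} (hK : ∀ p ∈ K, IsContract p) :
    LowerSemicontinuousOn (regret F r C) K := by
  intro p hp y hy
  obtain ⟨c0, hc0⟩ := h.C_nonempty
  have hne : { x | ∃ c ∈ C, x = OPT F r c - Uprin F r p c }.Nonempty := ⟨_, c0, hc0, rfl⟩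
  obtain ⟨x, ⟨c, hc, rfl⟩, hx⟩ := exists_lt_of_lt_csSup hne hy
  have := uprin_usc F r p c (OPT F r c - y) (by linarith)
  filter_upwards [this.filter_mono nhdsWithin_le_nhds, self_mem_nhdsWithin] with q hq hqK
  linarith [le_regret h (hK q hqK) hc]

theorem regret_congr {p q : Ω → ℝ} (hpq : ∀ a ω, F a ω * p ω = F a ω * q ω) :
    regret F r C p = regret F r C q := by
  have h1 : Uag F p = Uag F q := by
    funext c a; simp only [Uag, hpq]
  have h2 : prinAct F r p = prinAct F r q := by
    funext a; simp only [prinAct_eq', hpq]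
  simp only [regret, Uprin, h1, h2]

end inst

/-- There exists a deterministic contract attaining the infimum of the
regret over all deterministic contracts. -/
theorem exists_regret_minimizing_det_contract
    {A Ω : Type} [Fintype A] [Fintype Ω] [Nonempty A] [Nonempty Ω]
    (F : A → Ω → ℝ) (r : Ω → ℝ) (C : Set (A → ℝ))
    (hInst : IsPAInstance F r C) :
    ∃ pstar : Ω → ℝ, IsContract pstar ∧
      regret F r C pstar =
        sInf { x | ∃ p : Ω → ℝ, IsContract p ∧ x = regret F r C p } := by
  classical
  obtain ⟨m, hm, hmF⟩ : ∃ m : ℝ, 0 < m ∧ ∀ a ω, 0 < F a ω → m ≤ F a ω := by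
    obtain ⟨x, hx⟩ := Finite.exists_min
      (fun x : A × Ω => if 0 < F x.1 x.2 then F x.1 x.2 else 1)
    refine ⟨if 0 < F x.1 x.2 then F x.1 x.2 else 1, ?_, ?_⟩
    · split_ifs with h
      · exact h
      · exact one_pos
    · intro a ω h
      have := hx (a, ω)
      simpa only [h, if_true] using this
  have hKc : ∀ p ∈ Set.Icc (0 : Ω → ℝ) (fun _ => 3 / m), IsContract p := fun p hp => hp.1
  have h0K : (0 : Ω → ℝ) ∈ Set.Icc (0 : Ω → ℝ) (fun _ => 3 / m) :=
    ⟨le_rfl, fun _ => by positivity⟩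
  obtain ⟨p, hp, hmin⟩ := (regret_lsc hInst hKc).exists_isMinOn ⟨0, h0K⟩ isCompact_Icc
  refine ⟨p, hKc p hp, ?_⟩
  have hall : ∀ q : Ω → ℝ, IsContract q → regret F r C p ≤ regret F r C q := by
    intro q hq
    by_cases hl : ∃ a ω, 3 < F a ω * q ω
    · obtain ⟨a, ω, hl⟩ := hl
      exact (hmin h0K).trans ((regret_zero_le hInst).trans (regret_large hInst hq a ω hl))
    · push Not at hl
      rw [regret_congr (p := q) (q := fun ω => if ∃ a, 0 < F a ω then q ω else 0)]
      · apply hmin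
        constructor
        · intro ω
          dsimp only [Pi.zero_apply]
          split_ifs
          · exact hq ω
          · exact le_rfl
        · intro ω
          dsimp only
          split_ifs with hE
          · obtain ⟨a, ha⟩ := hE
            rw [le_div_iff₀ hm]
            have := mul_le_mul_of_nonneg_right (hmF a ω ha) (hq ω)
            linarith [hl a ω]
          · positivity
      · intro a ω
        split_ifs with hE
        · rfl
        · push Not at hE
          have : F a ω = 0 := le_antisymm (hE a) (hInst.F_mem a ω).1
          simp [this]
  have hl : IsLeast { x | ∃ p : Ω → ℝ, IsContract p ∧ x = regret F r C p }
      (regret F r C p) := by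
    refine ⟨⟨p, hKc p hp, rfl⟩, ?_⟩
    rintro x ⟨q, hq, rfl⟩
    exact hall q hq
  exact hl.csInf_eq.symm
end

section
/- In the non-existence instance, the infimum over randomized contracts γ of the regret R(γ) equals 1/e and is not attained: every randomized contract γ satisfies R(γ) > 1/e, and for every τ > 1/e there exists a randomized contract γ with R(γ) < τ. -/
open Finset

variable {A Ω : Type} [Fintype A] [Fintype Ω] [Nonempty A] [Nonempty Ω]

theorem aux_bdd (F : Fin 2 → Fin 2 → ℝ) (r p c : Fin 2 → ℝ) :
    BddAbove { x | ∃ a : Fin 2, (∀ a' : Fin 2, Uag F p c a' ≤ Uag F p c a) ∧ x = prinAct F r p a } := by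
  refine ⟨max (prinAct F r p 0) (prinAct F r p 1), ?_⟩
  rintro x ⟨a, -, rfl⟩
  fin_cases a
  · exact le_max_left _ _
  · exact le_max_right _ _

def idF : Fin 2 → Fin 2 → ℝ := fun a ω => if a = ω then (1:ℝ) else 0
def rr : Fin 2 → ℝ := fun ω => if ω = 1 then (1:ℝ) else 0

theorem Uag0 (p c : Fin 2 → ℝ) : Uag idF p c 0 = p 0 - c 0 := by
  simp [Uag, idF]
theorem Uag1 (p c : Fin 2 → ℝ) : Uag idF p c 1 = p 1 - c 1 := by
  simp [Uag, idF]
theorem pa0 (p : Fin 2 → ℝ) : prinAct idF rr p 0 = - p 0 := by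
  simp [prinAct, idF, rr]
theorem pa1 (p : Fin 2 → ℝ) : prinAct idF rr p 1 = 1 - p 1 := by
  simp [prinAct, idF, rr]

theorem Uprin_le (p c : Fin 2 → ℝ) (hp : ∀ i, 0 ≤ p i) (h0 : c 0 = 0) :
    Uprin idF rr p c ≤ if c 1 ≤ p 1 - p 0 then max 0 (1 - (p 1 - p 0)) else 0 := by
  have hp0 := hp 0
  apply Real.sSup_le
  · rintro x ⟨a, ha, rfl⟩
    fin_cases a
    · show prinAct idF rr p 0 ≤ _
      rw [pa0]
      split_ifs
      · exact le_trans (by linarith) (le_max_left _ _)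
      · linarith
    · show prinAct idF rr p 1 ≤ _
      have := ha 0
      change Uag idF p c 0 ≤ Uag idF p c 1 at this
      rw [Uag0, Uag1] at this
      rw [pa1, if_pos (by linarith)]
      exact le_trans (by linarith) (le_max_right _ _)
  · split_ifs
    · exact le_max_left _ _
    · exact le_rfl

theorem Uprin_ge1 (p c : Fin 2 → ℝ) (h0 : c 0 = 0) (h : c 1 ≤ p 1 - p 0) :
    1 - p 1 ≤ Uprin idF rr p c := by
  apply le_csSup (aux_bdd _ _ _ _)
  refine ⟨1, ?_, (pa1 p).symm⟩
  intro a
  fin_cases a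
  · show Uag idF p c 0 ≤ Uag idF p c 1
    rw [Uag0, Uag1]; linarith
  · exact le_rfl

theorem Uprin_ge0 (p c : Fin 2 → ℝ) (h0 : c 0 = 0) (h : p 1 - p 0 ≤ c 1) :
    - p 0 ≤ Uprin idF rr p c := by
  apply le_csSup (aux_bdd _ _ _ _)
  refine ⟨0, ?_, (pa0 p).symm⟩
  intro a
  fin_cases a
  · exact le_rfl
  · show Uag idF p c 1 ≤ Uag idF p c 0
    rw [Uag0, Uag1]; linarith

theorem Uprin_ge (p c : Fin 2 → ℝ) (hp : ∀ i, 0 ≤ p i) (h0 : c 0 = 0) :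
    - (p 0 + p 1) ≤ Uprin idF rr p c := by
  have hp0 := hp 0
  have hp1 := hp 1
  rcases le_total (c 1) (p 1 - p 0) with h | h
  · have := Uprin_ge1 p c h0 h
    linarith
  · have := Uprin_ge0 p c h0 h
    linarith

theorem OPT_eq (c : Fin 2 → ℝ) (h0 : c 0 = 0) (h1 : 0 ≤ c 1) (h2 : c 1 ≤ 1) :
    OPT idF rr c = 1 - c 1 := by
  have ub : ∀ x ∈ { x | ∃ p : Fin 2 → ℝ, IsContract p ∧ x = Uprin idF rr p c }, x ≤ 1 - c 1 := by
    rintro x ⟨p, hp, rfl⟩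
    refine (Uprin_le p c hp h0).trans ?_
    split_ifs
    · exact max_le (by linarith) (by linarith)
    · linarith
  apply le_antisymm
  · exact Real.sSup_le ub (by linarith)
  · have h := Uprin_ge1 ![0, c 1] c h0 (by simp)
    have h' : Uprin idF rr ![0, c 1] c ≤ OPT idF rr c := by
      apply le_csSup ⟨_, ub⟩
      refine ⟨_, ?_, rfl⟩
      intro i
      fin_cases i
      · simp
      · simpa using h1
    simp at h
    linarith

def CC : Set (Fin 2 → ℝ) := {c | c 0 = 0 ∧ 0 ≤ c 1 ∧ c 1 ≤ 1}

theorem regret_ge (γ : RandCon (Fin 2)) (hγ : γ.valid) (t : ℝ) (h0 : 0 ≤ t) (h1 : t ≤ 1) :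
    1 - t - ∑ i, γ.q i * (if t ≤ γ.ps i 1 - γ.ps i 0 then max 0 (1 - (γ.ps i 1 - γ.ps i 0)) else 0)
      ≤ regretRand idF rr CC γ := by
  have hb : BddAbove { x | ∃ c ∈ CC, x = OPT idF rr c - UprinRand idF rr γ c } := by
    refine ⟨1 - ∑ i, γ.q i * (-(γ.ps i 0 + γ.ps i 1)), ?_⟩
    rintro x ⟨c, ⟨hc0, hc1, hc2⟩, rfl⟩
    rw [OPT_eq c hc0 hc1 hc2]
    have : ∑ i, γ.q i * (-(γ.ps i 0 + γ.ps i 1)) ≤ UprinRand idF rr γ c :=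
      Finset.sum_le_sum fun i _ => mul_le_mul_of_nonneg_left (Uprin_ge _ _ (hγ i) hc0) (γ.q_nonneg i)
    linarith
  have hm : OPT idF rr ![0, t] - UprinRand idF rr γ ![0, t] ≤ regretRand idF rr CC γ :=
    le_csSup hb ⟨![0, t], ⟨by simp, by simpa using h0, by simpa using h1⟩, rfl⟩
  rw [OPT_eq _ (by simp) (by simpa using h0) (by simpa using h1)] at hm
  have : UprinRand idF rr γ ![0, t] ≤
      ∑ i, γ.q i * (if t ≤ γ.ps i 1 - γ.ps i 0 then max 0 (1 - (γ.ps i 1 - γ.ps i 0)) else 0) :=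
    Finset.sum_le_sum fun i _ => mul_le_mul_of_nonneg_left
      (by simpa using Uprin_le (γ.ps i) ![0, t] (hγ i) (by simp)) (γ.q_nonneg i)
  simp at hm
  linarith

theorem upper (n : ℕ) (hn : 0 < n) : ∃ γ : RandCon (Fin 2), γ.valid ∧
    regretRand idF rr CC γ ≤ (Real.exp 1)⁻¹ + 1 / n := by
  have hn' : (0:ℝ) < n := by exact_mod_cast hn
  set a : ℕ → ℝ := fun j => Real.exp (-(j / n)) with ha
  have apos : ∀ j, 0 < a j := fun j => Real.exp_pos _
  have ale : ∀ j, a j ≤ 1 := fun j => Real.exp_le_one_iff.2 (by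
    have : (0:ℝ) ≤ j / n := by positivity
    linarith)
  have astep : ∀ j, a j - a (j+1) ≤ a j / n := by
    intro j
    have e : a (j+1) = a j * Real.exp (-(1 / n)) := by
      simp only [ha]
      rw [← Real.exp_add]; congr 1; push_cast; ring
    have h := Real.add_one_le_exp (-(1 / (n:ℝ)))
    have := mul_le_mul_of_nonneg_left h (apos j).le
    rw [e]
    have e2 : a j / n = a j * (1 / n) := by ring
    rw [e2]; linarith
  have amono : ∀ j, a (j+1) ≤ a j := by
    intro j
    apply Real.exp_le_exp.2
    have : (j:ℝ) / n ≤ ((j+1 : ℕ) : ℝ) / n := by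
      gcongr; simp
    linarith
  let γ : RandCon (Fin 2) :=
    { n := n, ps := fun i => ![0, 1 - a (i+1)], q := fun _ => 1 / n,
      q_nonneg := fun _ => by positivity, q_sum := by simp; field_simp }
  have hv : γ.valid := by
    intro i ω
    show 0 ≤ (![0, 1 - a (i+1)] : Fin 2 → ℝ) ω
    fin_cases ω
    · simp
    · simpa using ale (i+1)
  refine ⟨γ, hv, ?_⟩
  apply Real.sSup_le
  swap
  · positivity
  rintro x ⟨c, ⟨hc0, hc1, hc2⟩, rfl⟩
  rw [OPT_eq c hc0 hc1 hc2]
  set s := 1 - c 1 with hs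
  let f : ℕ → ℝ := fun j => min (s - 1 / n) (a (j+1))
  have key : ∀ i : Fin n, f i - f (i+1) ≤ 1 / n * Uprin idF rr ![0, 1 - a (i+1)] c := by
    intro i
    by_cases h : a (i+1) ≤ s
    · have h1 := Uprin_ge1 ![0, 1 - a (i+1)] c hc0 (by simp; linarith)
      simp at h1
      have h2 : 1 / (n:ℝ) * a (i+1) ≤ 1 / n * Uprin idF rr ![0, 1 - a (i+1)] c :=
        mul_le_mul_of_nonneg_left h1 (by positivity)
      have h3 := astep (i+1)
      have h4 := amono (i+1)
      have e2 : a (i+1) / n = 1 / n * a (i+1) := by ring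
      have : f i - f (i+1) ≤ a (i+1) - a (i+1+1) := by
        simp only [f]
        rcases min_cases (s - 1/(n:ℝ)) (a (i+1)) with ⟨h5, h6⟩ | ⟨h5, h6⟩ <;>
        rcases min_cases (s - 1/(n:ℝ)) (a (i+1+1)) with ⟨h7, h8⟩ | ⟨h7, h8⟩ <;>
        rw [h5, h7] <;> linarith
      linarith
    · push Not at h
      have h1 := Uprin_ge0 ![0, 1 - a (i+1)] c hc0 (by simp; linarith)
      simp at h1
      have h3 := astep (i+1)
      have h4 := amono (i+1)
      have h5 : a (i+1) / n ≤ 1 / n := by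
        gcongr
        exact ale _
      have e : f i = f (i+1) := by
        simp only [f]
        rw [min_eq_left (by linarith), min_eq_left (by linarith)]
      rw [e, sub_self]
      positivity
  have hsum : ∑ i : Fin n, (f i - f (i+1)) ≤ UprinRand idF rr γ c :=
    Finset.sum_le_sum fun i _ => key i
  rw [Fin.sum_univ_eq_sum_range (fun i => f i - f (i+1)) n, Finset.sum_range_sub'] at hsum
  have hf0 : f 0 = s - 1 / n := by
    apply min_eq_left
    have h3 := astep 0
    have : a 0 = 1 := by simp [ha]
    rw [this] at h3
    simp only [zero_add] at *
    linarith
  have hfn : f n ≤ (Real.exp 1)⁻¹ := by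
    refine (min_le_right _ _).trans ((amono n).trans ?_)
    simp only [ha]
    rw [div_self hn'.ne', Real.exp_neg]
  linarith

theorem int_w (d : ℝ) (h0 : 0 ≤ d) (h1 : d < 1) :
    ∫ t in (0:ℝ)..d, ((1 - t) ^ 2)⁻¹ = (1 - d)⁻¹ - 1 := by
  have := intervalIntegral.integral_eq_sub_of_hasDerivAt (f := fun t : ℝ => (1 - t)⁻¹)
    (f' := fun t : ℝ => ((1 - t) ^ 2)⁻¹) (a := 0) (b := d) ?_ ?_
  · rw [this]; simp
  · intro t ht
    rw [Set.uIcc_of_le h0] at ht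
    have h : (1 - t) ≠ 0 := by have := ht.2; intro h; linarith
    have := ((hasDerivAt_id t).const_sub 1).fun_inv h
    simpa using this
  · apply ContinuousOn.intervalIntegrable
    rw [Set.uIcc_of_le h0]
    apply ContinuousOn.inv₀ (by fun_prop)
    intro t ht
    have := ht.2
    have : 0 < 1 - t := by linarith
    positivity

theorem int_l (d : ℝ) (h0 : 0 ≤ d) (h1 : d < 1) :
    ∫ t in (0:ℝ)..d, (1 - t) * ((1 - t) ^ 2)⁻¹ = - Real.log (1 - d) := by
  have := intervalIntegral.integral_eq_sub_of_hasDerivAt (f := fun t : ℝ => - Real.log (1 - t))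
    (f' := fun t : ℝ => (1 - t) * ((1 - t) ^ 2)⁻¹) (a := 0) (b := d) ?_ ?_
  · rw [this]; simp
  · intro t ht
    rw [Set.uIcc_of_le h0] at ht
    have h : (1 - t) ≠ 0 := by have := ht.2; intro h; linarith
    have := (((hasDerivAt_id t).const_sub 1).log h).fun_neg
    have e : (1 - t) * ((1 - t) ^ 2)⁻¹ = -(-1 / (1 - t)) := by field_simp
    rw [e]
    exact this
  · apply ContinuousOn.intervalIntegrable
    rw [Set.uIcc_of_le h0]
    apply ContinuousOn.mul (by fun_prop)
    apply ContinuousOn.inv₀ (by fun_prop)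
    intro t ht
    have := ht.2
    have : 0 < 1 - t := by linarith
    positivity

theorem cont_w (x : ℝ) (h1 : x < 1) : ContinuousOn (fun t : ℝ => ((1 - t) ^ 2)⁻¹) (Set.Icc 0 x) := by
  apply ContinuousOn.inv₀ (by fun_prop)
  intro t ht
  have := ht.2
  have : 0 < 1 - t := by linarith
  positivity

theorem ind_int (x d v : ℝ) (h0 : 0 ≤ x) (h1 : x < 1) :
    IntervalIntegrable (fun t => (if t ≤ d then v else 0) * ((1 - t) ^ 2)⁻¹)
      MeasureTheory.volume 0 x := by
  have h : IntervalIntegrable (fun t : ℝ => v * ((1 - t) ^ 2)⁻¹) MeasureTheory.volume 0 x := by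
    apply ContinuousOn.intervalIntegrable
    rw [Set.uIcc_of_le h0]
    exact continuousOn_const.mul (cont_w x h1)
  rw [intervalIntegrable_iff] at *
  have := h.indicator (measurableSet_Iic (a := d))
  refine this.congr (Filter.Eventually.of_forall fun t => ?_)
  simp only [Set.indicator, Set.mem_Iic]
  split_ifs <;> simp

/-- Contribution of one contract. -/
theorem piece (x d : ℝ) (h0 : 0 ≤ x) (h1 : x < 1) :
    (if 0 ≤ d then max 0 (1 - d) else 0) +
    ∫ t in (0:ℝ)..x, (if t ≤ d then max 0 (1 - d) else 0) * ((1 - t) ^ 2)⁻¹ ≤ 1 := by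
  by_cases hd : 0 ≤ d
  swap
  · rw [if_neg hd, intervalIntegral.integral_congr (g := fun _ => 0)]
    · simp
    · intro t ht
      rw [Set.uIcc_of_le h0] at ht
      have := ht.1
      push Not at hd
      simp only
      rw [if_neg (by linarith)]; simp
  rw [if_pos hd]
  rcases le_total d x with hx | hx
  · have e : ∫ t in (0:ℝ)..x, (if t ≤ d then max 0 (1 - d) else 0) * ((1 - t) ^ 2)⁻¹
        = ∫ t in (0:ℝ)..d, max 0 (1 - d) * ((1 - t) ^ 2)⁻¹ := by
      rw [← intervalIntegral.integral_indicator (a₂ := d) (a₃ := x) ⟨hd, hx⟩]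
      apply intervalIntegral.integral_congr
      intro t _
      simp only [Set.indicator, Set.mem_ofPred_eq]
      split_ifs <;> simp
    rw [e, intervalIntegral.integral_const_mul, int_w d hd (by linarith),
      max_eq_right (by linarith)]
    have : 1 - d ≠ 0 := by intro h; linarith
    rw [mul_sub, mul_inv_cancel₀ this]; linarith
  · have e : ∫ t in (0:ℝ)..x, (if t ≤ d then max 0 (1 - d) else 0) * ((1 - t) ^ 2)⁻¹
        = ∫ t in (0:ℝ)..x, max 0 (1 - d) * ((1 - t) ^ 2)⁻¹ := by
      apply intervalIntegral.integral_congr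
      intro t ht
      rw [Set.uIcc_of_le h0] at ht
      have := ht.2
      simp only
      rw [if_pos (by linarith)]
    rw [e, intervalIntegral.integral_const_mul, int_w x h0 h1]
    have hpos : 0 < 1 - x := by linarith
    have : max 0 (1 - d) ≤ 1 - x := max_le (by linarith) (by linarith)
    have := mul_le_mul_of_nonneg_right this (inv_nonneg.2 hpos.le)
    rw [mul_inv_cancel₀ hpos.ne'] at this
    linarith

theorem lower (n : ℕ) (q d : Fin n → ℝ) (hq : ∀ i, 0 ≤ q i) (hq1 : ∑ i, q i = 1)
    (H : ∀ t, 0 ≤ t → t ≤ 1 → 1 - t - ∑ i, q i * (if t ≤ d i then max 0 (1 - d i) else 0)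
      ≤ (Real.exp 1)⁻¹) : False := by
  set R := (Real.exp 1)⁻¹ with hR
  have hRpos : 0 < R := by positivity
  have hR1 : R < 1 := by
    rw [hR]; apply inv_lt_one_of_one_lt₀; simp
  set x := 1 - R with hx
  have hx0 : 0 < x := by linarith
  have hx1 : x < 1 := by linarith
  set w : ℝ → ℝ := fun t => ((1 - t) ^ 2)⁻¹ with hw
  set h : ℝ → ℝ := fun t => ∑ i, q i * (if t ≤ d i then max 0 (1 - d i) else 0) with hh
  -- a small interval on which h is constant
  obtain ⟨s, hs0, hsx, hs⟩ : ∃ s, 0 < s ∧ s ≤ x ∧ ∀ i, 0 < d i → s ≤ d i := by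
    have : ∀ S : Finset (Fin n), ∃ s, 0 < s ∧ s ≤ x ∧ ∀ i ∈ S, 0 < d i → s ≤ d i := by
      intro S
      induction S using Finset.induction_on with
      | empty => exact ⟨x, hx0, le_rfl, by simp⟩
      | insert a S _ ih =>
        obtain ⟨s, h1, h2, h3⟩ := ih
        by_cases ha : 0 < d a
        · refine ⟨min s (d a), lt_min h1 ha, (min_le_left _ _).trans h2, ?_⟩
          intro i hi hdi
          rcases Finset.mem_insert.1 hi with rfl | hi
          · exact min_le_right _ _
          · exact (min_le_left _ _).trans (h3 i hi hdi)
        · refine ⟨s, h1, h2, ?_⟩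
          intro i hi hdi
          rcases Finset.mem_insert.1 hi with rfl | hi
          · exact absurd hdi ha
          · exact h3 i hi hdi
    obtain ⟨s, h1, h2, h3⟩ := this Finset.univ
    exact ⟨s, h1, h2, fun i => h3 i (Finset.mem_univ i)⟩
  have hconst : ∀ t u, 0 < t → t ≤ s → 0 < u → u ≤ s → h t = h u := by
    intro t u ht hts hu hus
    apply Finset.sum_congr rfl
    intro i _
    by_cases hd : 0 < d i
    · have := hs i hd
      rw [if_pos (by linarith), if_pos (by linarith)]
    · rw [if_neg (by linarith), if_neg (by linarith)]
  have hstrict : ∀ t, 0 < t → t ≤ s → 1 - t - h t < R := by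
    intro t ht hts
    have h1 := H (t/2) (by linarith) (by linarith)
    have h2 := hconst t (t/2) ht hts (by linarith) (by linarith)
    change 1 - t/2 - h (t/2) ≤ R at h1
    linarith
  have hwpos : ∀ t, t ≤ x → 0 < w t := by
    intro t ht
    have : 0 < 1 - t := by linarith
    simp only [hw]; positivity
  have ih : ∀ i, IntervalIntegrable (fun t => q i * ((if t ≤ d i then max 0 (1 - d i) else 0) * w t))
      MeasureTheory.volume 0 x := fun i => (ind_int x (d i) _ hx0.le hx1).const_mul _
  have iw : IntervalIntegrable w MeasureTheory.volume 0 x := by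
    apply ContinuousOn.intervalIntegrable
    rw [Set.uIcc_of_le hx0.le]
    exact cont_w x hx1
  have i1 : IntervalIntegrable (fun t => (1 - t) * w t) MeasureTheory.volume 0 x := by
    apply ContinuousOn.intervalIntegrable
    rw [Set.uIcc_of_le hx0.le]
    exact ContinuousOn.mul (by fun_prop) (cont_w x hx1)
  have ehw : (fun t => h t * w t) =
      fun t => ∑ i, q i * ((if t ≤ d i then max 0 (1 - d i) else 0) * w t) := by
    funext t
    simp only [hh, Finset.sum_mul, mul_assoc]
  have ihw : IntervalIntegrable (fun t => h t * w t) MeasureTheory.volume 0 x := by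
    rw [ehw]
    have := IntervalIntegrable.sum Finset.univ (fun i _ => ih i)
    refine this.congr (fun t _ => ?_)
    simp
  have Ihw : h 0 + ∫ t in (0:ℝ)..x, h t * w t ≤ 1 := by
    rw [ehw, intervalIntegral.integral_finsetSum (fun i _ => ih i), hh,
      ← Finset.sum_add_distrib]
    refine le_trans ?_ hq1.le
    apply Finset.sum_le_sum
    intro i _
    rw [intervalIntegral.integral_const_mul, ← mul_add]
    have := mul_le_mul_of_nonneg_left (piece x (d i) hx0.le hx1) (hq i)
    rw [mul_one] at this
    exact this
  have I1 : ∫ t in (0:ℝ)..x, (1 - t) * w t = 1 := by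
    rw [int_l x hx0.le hx1, hx, sub_sub_cancel, hR, Real.log_inv, Real.log_exp]; simp
  have Iw : ∫ t in (0:ℝ)..x, w t = R⁻¹ - 1 := by
    rw [int_w x hx0.le hx1, hx, sub_sub_cancel]
  have lt : ∫ t in (0:ℝ)..x, ((1 - t) * w t - h t * w t) < ∫ t in (0:ℝ)..x, R * w t := by
    apply intervalIntegral.integral_lt_integral_of_ae_le_of_measure_setOfPred_lt_ne_zero hx0.le
      (i1.sub ihw) (iw.const_mul R)
    · refine (MeasureTheory.ae_restrict_iff' measurableSet_Ioc).2
        (Filter.Eventually.of_forall fun t ht => ?_)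
      have h1 : 1 - t - h t ≤ R := H t ht.1.le (by linarith [ht.2])
      have := mul_le_mul_of_nonneg_right h1 (hwpos t ht.2).le
      linarith
    · intro h0
      have sub : Set.Ioc 0 s ⊆ {t | (1 - t) * w t - h t * w t < R * w t} := by
        intro t ht
        have h1 := hstrict t ht.1 ht.2
        have := mul_lt_mul_of_pos_right h1 (hwpos t (ht.2.trans hsx))
        simp only [Set.mem_ofPred_eq]
        linarith
      have h2 := MeasureTheory.measure_mono_null sub h0
      rw [MeasureTheory.Measure.restrict_apply measurableSet_Ioc,
        Set.inter_eq_left.2 (Set.Ioc_subset_Ioc_right hsx), Real.volume_Ioc] at h2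
      simp at h2
      linarith
  rw [intervalIntegral.integral_sub i1 ihw, intervalIntegral.integral_const_mul, I1, Iw,
    mul_sub, mul_inv_cancel₀ hRpos.ne'] at lt
  have hz : 1 - 0 - h 0 ≤ R := H 0 le_rfl zero_le_one
  linarith

/-- In the non-existence instance, the infimum of the regret over
randomized contracts equals `1/e` and is not attained: every randomized contract has
regret strictly greater than `1/e`, while regrets arbitrarily close to `1/e` are
achievable. -/
theorem nonexistence_instance_randomized
    (F : Fin 2 → Fin 2 → ℝ) (hF : F = fun a ω => if a = ω then (1:ℝ) else 0)
    (r : Fin 2 → ℝ) (hr : r = fun ω => if ω = 1 then (1:ℝ) else 0)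
    (C : Set (Fin 2 → ℝ))
    (hC : C = {c | c 0 = 0 ∧ 0 ≤ c 1 ∧ c 1 ≤ 1}) :
    sInf { x | ∃ γ : RandCon (Fin 2), γ.valid ∧ x = regretRand F r C γ }
        = (Real.exp 1)⁻¹ ∧
      (∀ γ : RandCon (Fin 2), γ.valid → regretRand F r C γ > (Real.exp 1)⁻¹) ∧
      (∀ τ : ℝ, τ > (Real.exp 1)⁻¹ →
        ∃ γ : RandCon (Fin 2), γ.valid ∧ regretRand F r C γ < τ) := by
  have eF : F = idF := hF
  have er : r = rr := hr
  have eC : C = CC := hC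
  subst eF er eC
  have P2 : ∀ γ : RandCon (Fin 2), γ.valid → regretRand idF rr CC γ > (Real.exp 1)⁻¹ := by
    intro γ hγ
    by_contra hcon
    push Not at hcon
    exact lower γ.n γ.q (fun i => γ.ps i 1 - γ.ps i 0) γ.q_nonneg γ.q_sum
      fun t h0 h1 => (regret_ge γ hγ t h0 h1).trans hcon
  have P3 : ∀ τ : ℝ, τ > (Real.exp 1)⁻¹ →
        ∃ γ : RandCon (Fin 2), γ.valid ∧ regretRand idF rr CC γ < τ := by
    intro τ hτ
    obtain ⟨n, hn⟩ := exists_nat_one_div_lt (sub_pos.2 hτ)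
    obtain ⟨γ, hv, hγ⟩ := upper (n+1) (Nat.succ_pos n)
    refine ⟨γ, hv, ?_⟩
    push_cast at hγ
    linarith
  refine ⟨?_, P2, P3⟩
  have lb : ∀ x ∈ { x | ∃ γ : RandCon (Fin 2), γ.valid ∧ x = regretRand idF rr CC γ },
      (Real.exp 1)⁻¹ ≤ x := by
    rintro x ⟨γ, hv, rfl⟩
    exact (P2 γ hv).le
  apply le_antisymm
  · apply le_of_forall_gt_imp_ge_of_dense
    intro τ hτ
    obtain ⟨γ, hv, hγ⟩ := P3 τ hτ
    exact (csInf_le ⟨_, lb⟩ ⟨γ, hv, rfl⟩).trans hγ.le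
  · obtain ⟨γ, hv, -⟩ := P3 _ (lt_add_one _)
    exact le_csInf ⟨_, γ, hv, rfl⟩ lb
end

section
/- In the non-existence instance, let γ be the randomized contract placing probability 1/2 on each of the deterministic contracts p^1 = (0, 1/4) and p^2 = (0, 3/4) (payments listed as (p_{ω1}, p_{ω2})). Then sup_{c∈C}(OPT(c) − U^p(γ,c)) = 5/8, and this supremum is not attained: OPT(c) − U^p(γ,c) < 5/8 for every c ∈ C. -/
open Finset

variable {A Ω : Type} [Fintype A] [Fintype Ω] [Nonempty A] [Nonempty Ω]

/-- The randomized contract placing probability `1/2` on each of two given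
deterministic contracts. -/
noncomputable def uniform2 {Ω : Type} (p1 p2 : Ω → ℝ) : RandCon Ω where
  n := 2
  ps := ![p1, p2]
  q := fun _ => 1/2
  q_nonneg := fun _ => by norm_num
  q_sum := by norm_num [Fin.sum_univ_two]

theorem ne_rand (F : Fin 2 → Fin 2 → ℝ) (r p1 p2 c : Fin 2 → ℝ) :
    UprinRand F r (uniform2 p1 p2) c = 1/2 * Uprin F r p1 c + 1/2 * Uprin F r p2 c := by
  have h : UprinRand F r (uniform2 p1 p2) c
      = ∑ i : Fin 2, (1/2 : ℝ) * Uprin F r ((![p1, p2] : Fin 2 → Fin 2 → ℝ) i) c := rfl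
  rw [h, Fin.sum_univ_two]
  rfl

theorem ne_work (p c : Fin 2 → ℝ) (hc : c 0 = 0) (h : p 0 ≤ p 1 - c 1) (h2 : - p 0 ≤ 1 - p 1) :
    Uprin (fun a ω : Fin 2 => if a = ω then (1:ℝ) else 0) (fun ω => if ω = 1 then (1:ℝ) else 0) p c
      = 1 - p 1 := by
  unfold Uprin
  apply IsGreatest.csSup_eq
  constructor
  · refine ⟨1, ?_, ?_⟩
    · intro a
      fin_cases a <;> simp [Uag, Fin.sum_univ_two, hc] <;> linarith
    · simp [prinAct, Fin.sum_univ_two]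
  · rintro x ⟨a, -, rfl⟩
    fin_cases a <;> simp [prinAct, Fin.sum_univ_two] <;> linarith

theorem ne_shirk (p c : Fin 2 → ℝ) (hc : c 0 = 0) (h : p 1 - c 1 < p 0) :
    Uprin (fun a ω : Fin 2 => if a = ω then (1:ℝ) else 0) (fun ω => if ω = 1 then (1:ℝ) else 0) p c
      = - p 0 := by
  unfold Uprin
  apply IsGreatest.csSup_eq
  constructor
  · refine ⟨0, ?_, ?_⟩
    · intro a
      fin_cases a <;> simp [Uag, Fin.sum_univ_two, hc] <;> linarith
    · simp [prinAct, Fin.sum_univ_two]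
  · rintro x ⟨a, ha, rfl⟩
    have h0 := ha 0
    fin_cases a
    · simp [prinAct, Fin.sum_univ_two]
    · simp [Uag, Fin.sum_univ_two, hc] at h0
      linarith

theorem ne_opt (c : Fin 2 → ℝ) (hc : c 0 = 0) (h0 : 0 ≤ c 1) (h1 : c 1 ≤ 1) :
    OPT (fun a ω : Fin 2 => if a = ω then (1:ℝ) else 0) (fun ω => if ω = 1 then (1:ℝ) else 0) c
      = 1 - c 1 := by
  unfold OPT
  apply IsGreatest.csSup_eq
  constructor
  · refine ⟨c, ?_, ?_⟩
    · intro a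
      fin_cases a
      · simp [hc]
      · exact h0
    · rw [ne_work c c hc] <;> linarith
  · rintro x ⟨p, hp, rfl⟩
    have hp0 := hp 0
    unfold Uprin
    apply Real.sSup_le
    · rintro x ⟨a, ha, rfl⟩
      have h0 := ha 0
      fin_cases a
      · simp [prinAct, Fin.sum_univ_two]
        linarith
      · simp [Uag, Fin.sum_univ_two, hc] at h0
        simp [prinAct, Fin.sum_univ_two]
        linarith
    · linarith

/-- In the non-existence instance, for the randomized contract placing
probability `1/2` on each of `p¹ = (0, 1/4)` and `p² = (0, 3/4)`, the supremum
`sup_{c∈C} (OPT(c) − U^p(γ,c))` equals `5/8` and is not attained. -/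
theorem nonexistence_instance_sup_not_attained
    (F : Fin 2 → Fin 2 → ℝ) (hF : F = fun a ω => if a = ω then (1:ℝ) else 0)
    (r : Fin 2 → ℝ) (hr : r = fun ω => if ω = 1 then (1:ℝ) else 0)
    (C : Set (Fin 2 → ℝ))
    (hC : C = {c | c 0 = 0 ∧ 0 ≤ c 1 ∧ c 1 ≤ 1})
    (p1 p2 : Fin 2 → ℝ)
    (hp1 : p1 = fun ω => if ω = 1 then (1/4 : ℝ) else 0)
    (hp2 : p2 = fun ω => if ω = 1 then (3/4 : ℝ) else 0) :
    sSup { x | ∃ c ∈ C, x = OPT F r c - UprinRand F r (uniform2 p1 p2) c } = 5/8 ∧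
      ∀ c ∈ C, OPT F r c - UprinRand F r (uniform2 p1 p2) c < 5/8 := by
  subst hF hr hC hp1 hp2
  have key : ∀ c : Fin 2 → ℝ, c 0 = 0 → 1/4 < c 1 → c 1 ≤ 3/4 →
      OPT (fun a ω : Fin 2 => if a = ω then (1:ℝ) else 0) (fun ω => if ω = 1 then (1:ℝ) else 0) c -
      UprinRand (fun a ω : Fin 2 => if a = ω then (1:ℝ) else 0)
        (fun ω => if ω = 1 then (1:ℝ) else 0)
        (uniform2 (fun ω => if ω = 1 then (1/4 : ℝ) else 0)
          (fun ω => if ω = 1 then (3/4 : ℝ) else 0)) c = 7/8 - c 1 := by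
    intro c hc h1 h2
    rw [ne_opt c hc (by linarith) (by linarith)]
    rw [ne_rand]
    rw [ne_shirk _ c hc (by simp; linarith), ne_work _ c hc (by simp; linarith) (by norm_num)]
    norm_num
    ring
  have lt : ∀ c ∈ {c : Fin 2 → ℝ | c 0 = 0 ∧ 0 ≤ c 1 ∧ c 1 ≤ 1},
      OPT (fun a ω : Fin 2 => if a = ω then (1:ℝ) else 0) (fun ω => if ω = 1 then (1:ℝ) else 0) c -
      UprinRand (fun a ω : Fin 2 => if a = ω then (1:ℝ) else 0)
        (fun ω => if ω = 1 then (1:ℝ) else 0)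
        (uniform2 (fun ω => if ω = 1 then (1/4 : ℝ) else 0)
          (fun ω => if ω = 1 then (3/4 : ℝ) else 0)) c < 5/8 := by
    rintro c ⟨hc, h0, h1⟩
    by_cases ha : c 1 ≤ 1/4
    · rw [ne_opt c hc h0 h1]
      rw [ne_rand]
      rw [ne_work _ c hc (by simp; linarith) (by norm_num),
        ne_work _ c hc (by simp; linarith) (by norm_num)]
      norm_num
      linarith
    · push Not at ha
      by_cases hb : c 1 ≤ 3/4
      · rw [key c hc ha hb]
        linarith
      · push Not at hb
        rw [ne_opt c hc h0 h1]
        rw [ne_rand]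
        rw [ne_shirk _ c hc (by simp; linarith), ne_shirk _ c hc (by simp; linarith)]
        norm_num
        linarith
  refine ⟨?_, lt⟩
  apply csSup_eq_of_forall_le_of_forall_lt_exists_gt
  · exact ⟨_, ![0, 0], by simp, rfl⟩
  · rintro x ⟨c, hc, rfl⟩
    exact (lt c hc).le
  · intro w hw
    have hm : 0 < min (1/2) ((5/8 - w) / 2) := lt_min (by norm_num) (by linarith)
    have hm1 := min_le_left (1/2) ((5/8 - w) / 2)
    have hm2 := min_le_right (1/2) ((5/8 - w) / 2)
    generalize min (1/2) ((5/8 - w) / 2) = m at hm hm1 hm2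
    refine ⟨_, ⟨![0, 1/4 + m], ⟨by simp, ?_, ?_⟩, rfl⟩, ?_⟩
    · simp; linarith
    · simp; linarith
    · rw [key _ (by simp) (by simp; linarith) (by simp; linarith)]
      simp
      linarith
end
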